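/- Let s ∈ ℕ with s ≥ 2, and let a, p ∈ ℝ with |a| ≤ 1 and 1/2 ≤ p < 1. Then Li*_{{1}_s}(1−p, {1}_{s−2}, 1 + ap/(1−p)) = Li_s(a) − Li_s(1 − 1/p), where Li_s(x) = Σ_{n≥1} x^n/n^s is the one-dimensional polylogarithm. -/

import Mathlib

/-- One-dimensional polylogarithm `Li_s(x) = ∑_{n≥1} x^n/n^s`. -/
noncomputable def Li (s : ℕ) (x : ℝ) : ℝ := ∑' n : ℕ, x ^ (n + 1) / (n + 1 : ℝ) ^ s

/-- Multiple polylogarithm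
`Li*_{s₁,…,s_d}(x₁,…,x_d) = ∑_{n₁ ≥ ⋯ ≥ n_d ≥ 1} ∏ᵢ xᵢ^{nᵢ}/nᵢ^{sᵢ}`. -/
noncomputable def LiStar (s : List ℕ) (x : List ℝ) : ℝ :=
  ∑' m : {m : Fin s.length → ℕ // (∀ i j : Fin s.length, i ≤ j → m j ≤ m i) ∧ ∀ i, 1 ≤ m i},
    ∏ i : Fin s.length, x.getD (i : ℕ) 0 ^ m.1 i / (m.1 i : ℝ) ^ s.get i

/-!
The inner sums over `n₂ ≥ ⋯ ≥ n_s` arise from the powers `yⁿ` by iterating the operator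
`f ↦ (N ↦ ∑_{1 ≤ n ≤ N} f n / n)`. In the binomial basis `n ↦ C(n, j)`, `j ≥ 1`, this operator is
diagonal with eigenvalues `1 / j`, by the hockey-stick identity, and for `n ≥ 1` the coefficients of
`yⁿ` are `(y - 1)^j - (-1)^j`. Since `∑ₙ C(n, j) qⁿ / n = (q / (1 - q))^j / j`, the outer sum
against `qⁿ / n` turns these coefficients into two one-dimensional polylogarithms, at
`(y - 1) q / (1 - q)` and at `-q / (1 - q)`.
-/

open Finset Filter Topology

section BinomialTransform

variable {R : Type*}

/-- The binomial transform `n ↦ ∑_{j ≥ 1} C(n, j) c_j`, with the coefficient `c_j` stored as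
`c (j - 1)`. -/
def binomialTransform [Semiring R] (c : ℕ → R) (n : ℕ) : R :=
  ∑ k ∈ range n, (n.choose (k + 1) : R) * c k

theorem binomialTransform_eq_sum_range [Semiring R] (c : ℕ → R) {n N : ℕ} (h : n ≤ N) :
    binomialTransform c n = ∑ k ∈ range N, (n.choose (k + 1) : R) * c k := by
  refine sum_subset (range_subset_range.2 h) fun k _ hk => ?_
  rw [Nat.choose_eq_zero_of_lt (Nat.lt_succ_of_le (not_lt.1 (mt mem_range.2 hk))), Nat.cast_zero,
    zero_mul]

theorem binomialTransform_pow [CommRing R] (x : R) (n : ℕ) :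
    binomialTransform (fun k => x ^ (k + 1)) n = (x + 1) ^ n - 1 := by
  simp only [add_pow, sum_range_succ', one_pow, mul_one, pow_zero, Nat.choose_zero_right,
    Nat.cast_one, add_sub_cancel_right]
  exact sum_congr rfl fun k _ => mul_comm _ _

variable {K : Type*} [Field K] [CharZero K]

theorem succ_choose_succ_div (n k : ℕ) :
    ((n + 1).choose (k + 1) : K) / (n + 1 : ℕ) = (n.choose k : K) / (k + 1 : ℕ) := by
  rw [div_eq_div_iff (Nat.cast_ne_zero.2 n.succ_ne_zero) (Nat.cast_ne_zero.2 k.succ_ne_zero)]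
  exact_mod_cast (Nat.add_one_mul_choose_eq n k).symm.trans (mul_comm _ _)

theorem sum_Icc_choose_succ_div (N k : ℕ) :
    ∑ n ∈ Icc 1 N, (n.choose (k + 1) : K) / n = (N.choose (k + 1) : K) / (k + 1 : ℕ) := by
  induction N with
  | zero => simp
  | succ N ih =>
    rw [sum_Icc_succ_top (Nat.le_add_left 1 N), ih, succ_choose_succ_div, ← add_div,
      Nat.choose_succ_succ', Nat.cast_add (N.choose k), add_comm (N.choose k : K)]

theorem sum_Icc_binomialTransform_div (c : ℕ → K) (N : ℕ) :
    ∑ n ∈ Icc 1 N, binomialTransform c n / n =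
      binomialTransform (fun k => c k / (k + 1 : ℕ)) N := by
  calc ∑ n ∈ Icc 1 N, binomialTransform c n / n
      = ∑ n ∈ Icc 1 N, ∑ k ∈ range N, (n.choose (k + 1) : K) / n * c k :=
        sum_congr rfl fun n hn => by
          rw [binomialTransform_eq_sum_range c (mem_Icc.1 hn).2, sum_div]
          exact sum_congr rfl fun k _ => mul_div_right_comm _ _ _
    _ = ∑ k ∈ range N, (∑ n ∈ Icc 1 N, (n.choose (k + 1) : K) / n) * c k := by
        rw [sum_comm]
        simp only [sum_mul]
    _ = binomialTransform (fun k => c k / (k + 1 : ℕ)) N :=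
        sum_congr rfl fun k _ => by
          rw [sum_Icc_choose_succ_div, div_mul_eq_mul_div, mul_div_assoc]

end BinomialTransform

section GeneratingFunction

variable {𝕜 : Type*} [RCLike 𝕜]

theorem hasSum_choose_succ_mul_pow_div (k : ℕ) {q : 𝕜} (hq : ‖q‖ < 1) :
    HasSum (fun n : ℕ => (n.choose (k + 1) : 𝕜) * (q ^ n / n))
      ((q / (1 - q)) ^ (k + 1) / (k + 1 : ℕ)) := by
  have hterm (n : ℕ) :
      ((n + (k + 1)).choose (k + 1) : 𝕜) * (q ^ (n + (k + 1)) / (n + (k + 1) : ℕ)) =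
        q ^ (k + 1) / (k + 1 : ℕ) * (((n + k).choose k : 𝕜) * q ^ n) := by
    rw [← add_assoc, mul_div_left_comm, succ_choose_succ_div]
    ring
  have hvalue : (q / (1 - q)) ^ (k + 1) / (k + 1 : ℕ) =
      q ^ (k + 1) / (k + 1 : ℕ) * (1 / (1 - q) ^ (k + 1)) := by
    rw [div_pow]
    ring
  rw [← hasSum_nat_add_iff' (k + 1), sum_eq_zero, sub_zero]
  · simp only [hterm, hvalue]
    exact (hasSum_choose_mul_geometric_of_norm_lt_one k hq).mul_left _
  · intro n hn
    rw [Nat.choose_eq_zero_of_lt (mem_range.1 hn), Nat.cast_zero, zero_mul]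

theorem hasSum_pow_div_mul_binomialTransform {c : ℕ → 𝕜} {q : 𝕜} (hq : ‖q‖ < 1)
    (hc : Summable fun k : ℕ => (‖q‖ / (1 - ‖q‖)) ^ (k + 1) / (k + 1 : ℕ) * ‖c k‖) :
    HasSum (fun n : ℕ => q ^ n / n * binomialTransform c n)
      (∑' k : ℕ, (q / (1 - q)) ^ (k + 1) / (k + 1 : ℕ) * c k) := by
  let u : ℕ × ℕ → 𝕜 := fun t => (t.2.choose (t.1 + 1) : 𝕜) * (q ^ t.2 / t.2) * c t.1
  have hcol (k : ℕ) : HasSum (fun n => u (k, n)) ((q / (1 - q)) ^ (k + 1) / (k + 1 : ℕ) * c k) :=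
    (hasSum_choose_succ_mul_pow_div k hq).mul_right (c k)
  have hcol_norm (k : ℕ) : HasSum (fun n => ‖u (k, n)‖)
      ((‖q‖ / (1 - ‖q‖)) ^ (k + 1) / (k + 1 : ℕ) * ‖c k‖) := by
    simpa only [u, norm_mul, norm_div, norm_pow, RCLike.norm_natCast] using
      (hasSum_choose_succ_mul_pow_div k ((norm_norm q).trans_lt hq)).mul_right ‖c k‖
  have hrow (n : ℕ) : HasSum (fun k => u (k, n)) (q ^ n / n * binomialTransform c n) := by
    have hvanish : ∀ k ∉ range n, u (k, n) = 0 := fun k hk => by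
      simp only [u]
      rw [Nat.choose_eq_zero_of_lt (Nat.lt_succ_of_le (not_lt.1 (mt mem_range.2 hk))),
        Nat.cast_zero, zero_mul, zero_mul]
    convert hasSum_sum_of_ne_finset_zero (L := .unconditional ℕ) hvanish using 1
    rw [binomialTransform, mul_sum]
    exact sum_congr rfl fun k _ => by simp only [u]; ring
  have hu : Summable u := by
    refine ((summable_prod_of_nonneg fun t => norm_nonneg (u t)).2
      ⟨fun k => (hcol_norm k).summable, ?_⟩).of_norm
    simpa only [(hcol_norm _).tsum_eq] using hc
  rw [(hu.hasSum.prod_fiberwise hcol).tsum_eq]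
  exact ((Equiv.prodComm ℕ ℕ).hasSum_iff.2 hu.hasSum).prod_fiberwise hrow

end GeneratingFunction

section TruncatedSum

/-- The finite set of tuples `N ≥ n₁ ≥ ⋯ ≥ n_d ≥ 1`. -/
noncomputable def antitoneTuples (d N : ℕ) : Finset (Fin d → ℕ) :=
  open Classical in {m ∈ Fintype.piFinset fun _ => Icc 1 N | Antitone m}

theorem mem_antitoneTuples {d N : ℕ} {m : Fin d → ℕ} :
    m ∈ antitoneTuples d N ↔ (∀ i, m i ∈ Icc 1 N) ∧ Antitone m := by
  rw [antitoneTuples, mem_filter, Fintype.mem_piFinset]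

theorem antitoneTuples_mono (d : ℕ) : Monotone (antitoneTuples d) := fun _ _ hN _ hm => by
  rw [mem_antitoneTuples] at hm ⊢
  exact ⟨fun i => Icc_subset_Icc_right hN (hm.1 i), hm.2⟩

theorem cons_mem_antitoneTuples {d N n : ℕ} {m : Fin d → ℕ} :
    (Fin.cons n m : Fin (d + 1) → ℕ) ∈ antitoneTuples (d + 1) N ↔
      n ∈ Icc 1 N ∧ m ∈ antitoneTuples d n := by
  have hcons : Antitone (Fin.cons n m : Fin (d + 1) → ℕ) ↔ (∀ i, m i ≤ n) ∧ Antitone m := by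
    simp only [Antitone, Fin.forall_fin_succ, Fin.cons_zero, Fin.cons_succ, Fin.succ_le_succ_iff,
      Fin.zero_le, le_refl, forall_const, nonpos_iff_eq_zero, Fin.succ_ne_zero,
      IsEmpty.forall_iff, true_and]
  simp only [mem_antitoneTuples, hcons, Fin.forall_fin_succ, Fin.cons_zero, Fin.cons_succ, mem_Icc]
  grind

theorem sum_antitoneTuples_succ {M : Type*} [AddCommMonoid M] (d N : ℕ)
    (f : (Fin (d + 1) → ℕ) → M) :
    ∑ m ∈ antitoneTuples (d + 1) N, f m =
      ∑ n ∈ Icc 1 N, ∑ m ∈ antitoneTuples d n, f (Fin.cons n m) := by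
  rw [sum_sigma']
  refine sum_nbij' (fun m => ⟨m 0, Fin.tail m⟩) (fun t => Fin.cons t.1 t.2) ?_ ?_ ?_ ?_ ?_
  · intro m hm
    rw [mem_sigma, ← cons_mem_antitoneTuples, Fin.cons_self_tail]
    exact hm
  · intro t ht
    exact cons_mem_antitoneTuples.2 (mem_sigma.1 ht)
  · intro m _
    exact Fin.cons_self_tail m
  · intro t _
    rfl
  · intro m _
    rw [Fin.cons_self_tail]

/-- The summand `∏ᵢ xᵢ^{nᵢ}/nᵢ^{sᵢ}` of `LiStar s x`. -/
noncomputable def liStarTerm (s : List ℕ) (x : List ℝ) (m : Fin s.length → ℕ) : ℝ :=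
  ∏ i : Fin s.length, x.getD (i : ℕ) 0 ^ m i / (m i : ℝ) ^ s.get i

/-- The part of the series `LiStar s x` over the tuples with `n₁ ≤ N`. -/
noncomputable def truncatedLiStar (s : List ℕ) (x : List ℝ) (N : ℕ) : ℝ :=
  ∑ m ∈ antitoneTuples s.length N, liStarTerm s x m

theorem truncatedLiStar_nil (x : List ℝ) (N : ℕ) : truncatedLiStar [] x N = 1 := by
  simp [truncatedLiStar, liStarTerm, antitoneTuples, Subsingleton.antitone]

theorem truncatedLiStar_cons (k : ℕ) (s : List ℕ) (y : ℝ) (x : List ℝ) (N : ℕ) :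
    truncatedLiStar (k :: s) (y :: x) N =
      ∑ n ∈ Icc 1 N, y ^ n / (n : ℝ) ^ k * truncatedLiStar s x n := by
  refine (sum_antitoneTuples_succ s.length N _).trans (sum_congr rfl fun n _ => ?_)
  rw [truncatedLiStar, mul_sum]
  exact sum_congr rfl fun m _ => Fin.prod_univ_succ _

theorem abs_liStarTerm (s : List ℕ) (x : List ℝ) (m : Fin s.length → ℕ) :
    |liStarTerm s x m| = liStarTerm s (x.map abs) m := by
  have hget (i : ℕ) : (x.map abs).getD i 0 = |x.getD i 0| := by
    simpa using x.getD_map (n := i) (d := 0) abs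
  simp only [liStarTerm, abs_prod, abs_div, abs_pow, Nat.abs_cast, hget]

theorem LiStar_eq_of_tendsto_truncatedLiStar {s : List ℕ} {x : List ℝ} {l : ℝ}
    (hbdd : BddAbove (Set.range (truncatedLiStar s (x.map abs))))
    (hlim : Tendsto (truncatedLiStar s x) atTop (𝓝 l)) : LiStar s x = l := by
  classical
  let ι := {m : Fin s.length → ℕ // (∀ i j, i ≤ j → m j ≤ m i) ∧ ∀ i, 1 ≤ m i}
  let T : ℕ → Finset ι := fun N => (antitoneTuples s.length N).subtype _
  have hT_sum (y : List ℝ) (N : ℕ) : ∑ m ∈ T N, liStarTerm s y m.1 = truncatedLiStar s y N :=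
    sum_subtype_of_mem _ fun m hm =>
      ⟨fun _ _ hij => (mem_antitoneTuples.1 hm).2 hij,
        fun i => (mem_Icc.1 ((mem_antitoneTuples.1 hm).1 i)).1⟩
  have hT : Tendsto T atTop atTop := by
    refine Monotone.tendsto_atTop_finset
      (fun N N' hN m hm => mem_subtype.2 (antitoneTuples_mono _ hN (mem_subtype.1 hm))) fun m =>
        ⟨univ.sup m.1, mem_subtype.2 (mem_antitoneTuples.2 ⟨fun i => ?_, fun i j => m.2.1 i j⟩)⟩
    exact mem_Icc.2 ⟨m.2.2 i, le_sup (f := m.1) (mem_univ i)⟩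
  have hsummable : Summable fun m : ι => liStarTerm s x m.1 := by
    obtain ⟨C, hC⟩ := hbdd
    refine Summable.of_norm <| summable_of_sum_le (c := C) (fun m => norm_nonneg _) fun F => ?_
    obtain ⟨N, hN⟩ := (hT.eventually_ge_atTop F).exists
    calc ∑ m ∈ F, ‖liStarTerm s x m.1‖ ≤ ∑ m ∈ T N, ‖liStarTerm s x m.1‖ :=
          sum_le_sum_of_subset_of_nonneg hN fun m _ _ => norm_nonneg _
      _ = truncatedLiStar s (x.map abs) N := by
          simp only [Real.norm_eq_abs, abs_liStarTerm, hT_sum]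
      _ ≤ C := hC ⟨N, rfl⟩
  exact tendsto_nhds_unique (hsummable.hasSum.comp hT) (hlim.congr fun N => (hT_sum x N).symm)

end TruncatedSum

section ReplicateOne

theorem summable_Li {s : ℕ} (hs : 2 ≤ s) {x : ℝ} (hx : |x| ≤ 1) :
    Summable fun n : ℕ => x ^ (n + 1) / (n + 1 : ℝ) ^ s := by
  refine Summable.of_norm_bounded
    ((summable_nat_add_iff 1).2 (Real.summable_one_div_nat_pow.2 hs)) fun n => ?_
  rw [norm_div, norm_pow, norm_pow, Real.norm_eq_abs, Nat.cast_add_one,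
    Real.norm_of_nonneg (Nat.cast_add_one_pos n).le]
  gcongr
  exact pow_le_one₀ (abs_nonneg x) hx

theorem hasSum_pow_div_mul_binomialTransform_pow_div {s : ℕ} (hs : 1 ≤ s) {q x : ℝ}
    (hq : |q| < 1) (hx : |q| * |x| ≤ 1 - |q|) :
    HasSum (fun n : ℕ => q ^ n / n *
        binomialTransform (fun k => x ^ (k + 1) / ((k + 1 : ℕ) : ℝ) ^ s) n)
      (Li (s + 1) (q / (1 - q) * x)) := by
  have hterm (v w : ℝ) (k : ℕ) :
      v ^ (k + 1) / (k + 1 : ℕ) * (w ^ (k + 1) / ((k + 1 : ℕ) : ℝ) ^ s) =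
        (v * w) ^ (k + 1) / (k + 1 : ℝ) ^ (s + 1) := by
    rw [div_mul_div_comm, ← mul_pow, Nat.cast_succ, ← pow_succ']
  have hratio : |(|q| / (1 - |q|) * |x|)| ≤ 1 := by
    have hq' : 0 < 1 - |q| := sub_pos.2 hq
    rw [abs_of_nonneg (by positivity), div_mul_eq_mul_div]
    exact (div_le_one hq').2 hx
  have hsum := hasSum_pow_div_mul_binomialTransform
    (c := fun k => x ^ (k + 1) / ((k + 1 : ℕ) : ℝ) ^ s) (q := q) hq <| by
      simpa only [norm_div, norm_pow, Real.norm_eq_abs, Nat.abs_cast, hterm] using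
        summable_Li (Nat.succ_le_succ hs) hratio
  simp only [hterm] at hsum
  exact hsum

theorem truncatedLiStar_replicate_one (r : ℕ) (y : ℝ) (N : ℕ) :
    truncatedLiStar (List.replicate (r + 1) 1) (List.replicate r 1 ++ [y]) N =
      binomialTransform (fun k => (y - 1) ^ (k + 1) / ((k + 1 : ℕ) : ℝ) ^ (r + 1)) N -
        binomialTransform (fun k => (-1) ^ (k + 1) / ((k + 1 : ℕ) : ℝ) ^ (r + 1)) N := by
  induction r generalizing N with
  | zero =>
    simp only [zero_add, pow_one, List.replicate_zero, List.replicate_one, List.nil_append,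
      truncatedLiStar_cons, truncatedLiStar_nil, ← sum_Icc_binomialTransform_div,
      ← sum_sub_distrib]
    refine sum_congr rfl fun n hn => ?_
    rw [binomialTransform_pow, binomialTransform_pow, neg_add_cancel, sub_add_cancel,
      zero_pow (Nat.one_le_iff_ne_zero.1 (mem_Icc.1 hn).1)]
    ring
  | succ r ih =>
    rw [List.replicate_succ (n := r + 1), List.replicate_succ (n := r) (a := (1 : ℝ)),
      List.cons_append, truncatedLiStar_cons]
    simp only [ih, one_pow, pow_one, pow_succ _ (r + 1), ← div_div,
      ← sum_Icc_binomialTransform_div, ← sum_sub_distrib]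
    exact sum_congr rfl fun n _ => by ring

theorem tendsto_truncatedLiStar_replicate_one (r : ℕ) {q y : ℝ} (hq : |q| ≤ 1 / 2)
    (hy : |q| * |y - 1| ≤ 1 - |q|) :
    Tendsto (truncatedLiStar (List.replicate (r + 2) 1) (q :: (List.replicate r 1 ++ [y]))) atTop
      (𝓝 (Li (r + 2) (q / (1 - q) * (y - 1)) - Li (r + 2) (q / (1 - q) * -1))) := by
  have hq1 : |q| < 1 := by linarith
  have hneg : |q| * |(-1 : ℝ)| ≤ 1 - |q| := by
    rw [abs_neg, abs_one]
    linarith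
  have hsum := (hasSum_pow_div_mul_binomialTransform_pow_div (Nat.le_add_left 1 r) hq1 hy).sub
    (hasSum_pow_div_mul_binomialTransform_pow_div (Nat.le_add_left 1 r) hq1 hneg)
  refine ((tendsto_add_atTop_iff_nat 1).2 hsum.tendsto_sum_nat).congr fun N => ?_
  rw [List.replicate_succ, truncatedLiStar_cons, range_eq_Ico,
    sum_eq_sum_Ico_succ_bot N.add_one_pos, zero_add, Ico_add_one_right_eq_Icc, Nat.cast_zero,
    div_zero, zero_mul, zero_mul, sub_zero, zero_add]
  exact sum_congr rfl fun n _ => by rw [truncatedLiStar_replicate_one, pow_one, mul_sub]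

end ReplicateOne

theorem stmt_11_general (s : ℕ) (hs : 2 ≤ s) (a p : ℝ) (hp : |1 - p| ≤ 1 / 2) (hp1 : p ≠ 1)
    (ha : |a * p| ≤ 1 - |1 - p|) :
    LiStar (List.replicate s 1)
        ((1 - p) :: (List.replicate (s - 2) (1 : ℝ) ++ [1 + a * p / (1 - p)])) =
      Li s a - Li s (1 - 1 / p) := by
  obtain ⟨r, rfl⟩ := Nat.exists_eq_add_of_le' hs
  have hq : 1 - p ≠ 0 := sub_ne_zero.2 hp1.symm
  have hp0 : p ≠ 0 := by rintro rfl; norm_num at hp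
  have hy : |1 - p| * |1 + a * p / (1 - p) - 1| ≤ 1 - |1 - p| := by
    rwa [← abs_mul, add_sub_cancel_left, mul_div_cancel₀ _ hq]
  have hy_abs : |(|1 - p|)| * |(|1 + a * p / (1 - p)|) - 1| ≤ 1 - |(|1 - p|)| := by
    rw [abs_abs]
    refine (mul_le_mul_of_nonneg_left ?_ (abs_nonneg _)).trans hy
    simpa only [abs_one] using abs_abs_sub_abs_le_abs_sub (1 + a * p / (1 - p)) 1
  have habs := tendsto_truncatedLiStar_replicate_one r ((abs_abs (1 - p)).trans_le hp) hy_abs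
  have hlim := tendsto_truncatedLiStar_replicate_one r hp hy
  rw [sub_sub_cancel, show (1 - p) / p * (1 + a * p / (1 - p) - 1) = a by field_simp; ring,
    show (1 - p) / p * -1 = 1 - 1 / p by field_simp; ring] at hlim
  refine LiStar_eq_of_tendsto_truncatedLiStar ?_ hlim
  simpa using habs.bddAbove_range

/-- Reduction of `Li*_{{1}_s}(1−p, {1}_{s−2}, 1+ap/(1−p))` to one-dimensional
polylogarithms. -/
theorem stmt_11 (s : ℕ) (hs : 2 ≤ s) (a p : ℝ) (ha : |a| ≤ 1)
    (hp1 : 1 / 2 ≤ p) (hp2 : p < 1) :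
    LiStar (List.replicate s 1)
        ((1 - p) :: (List.replicate (s - 2) (1 : ℝ) ++ [1 + a * p / (1 - p)])) =
      Li s a - Li s (1 - 1 / p) := by
  have habs : |1 - p| = 1 - p := abs_of_pos (by linarith)
  refine stmt_11_general s hs a p (by linarith) hp2.ne ?_
  rw [habs, sub_sub_cancel, abs_mul, abs_of_pos (by linarith : 0 < p)]
  exact mul_le_of_le_one_left (by linarith) ha
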